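/- Let F be a cellular automaton over A^ℕ. Then 𝔡_L(F(x), x) = 0 for every x ∈ A^ℕ if and only if there exists k ∈ ℕ such that F = σ^k. In other words, the cellular automata lying in the Feldman equivalence class of the identity are exactly the powers of the shift. -/

import Mathlib

open Filter

/-- The finite factor `x_[i, i+n)` of the infinite word `x`. -/
def factor {A : Type*} (x : ℕ → A) (i n : ℕ) : List A := List.ofFn (fun k : Fin n => x (i + k))

/-- The shift map `σ` on infinite words. -/
def shift {A : Type*} (x : ℕ → A) : ℕ → A := fun i => x (i + 1)
/-- The maximal length of a common (not necessarily contiguous) subsequence of `u` and `v`. -/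
noncomputable def lcs {A : Type*} (u v : List A) : ℕ :=
  sSup {n | ∃ w : List A, w.length = n ∧ w.Sublist u ∧ w.Sublist v}

/-- The (halved) Levenshtein distance `d_L(u,v) = (|u|+|v|)/2 - ℓ(u,v)`. -/
noncomputable def levD {A : Type*} (u v : List A) : ℝ :=
  ((u.length : ℝ) + v.length) / 2 - lcs u v

/-- The Feldman pseudometric `𝔡_L`. -/
noncomputable def feld {A : Type*} (x y : ℕ → A) : ℝ :=
  limsup (fun l : ℕ => levD (factor x 0 l) (factor y 0 l) / l) atTop

/-! If `x` and `y` have no common factor of length `p`, then every block of `p` letters of a common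
subsequence uses up at least `2 p + 1` letters of the two words together, so `𝔡_L(x, y)` is at least
`1 / (2 p + 1)`. Hence periodic words at Feldman distance `0` are shifts of one another, and on each
periodic word `F` acts as some power of the shift. That power may depend on the word. To make it
uniform, apply this to the periodic word `(W a z^m a)^∞`: as `F` fixes `z^∞`, the image has a long
run of `z`, which no shift by an amount between the diameter `s` and the period can match. So `F`
acts on `W` as `σ^k` with `k < s`, and `W` may be chosen to contain, for each `k < s`, a block
witnessing `F ≠ σ^k`. -/

section Lcs

variable {A : Type*} {u v w : List A} {p : ℕ}

theorem bddAbove_length_common_sublist (u v : List A) :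
    BddAbove {n | ∃ w : List A, w.length = n ∧ w.Sublist u ∧ w.Sublist v} := by
  refine ⟨u.length, ?_⟩
  rintro n ⟨w, rfl, hu, -⟩
  exact hu.length_le

theorem length_le_lcs (hu : w.Sublist u) (hv : w.Sublist v) : w.length ≤ lcs u v :=
  le_csSup (bddAbove_length_common_sublist u v) ⟨w, rfl, hu, hv⟩

theorem exists_sublist_length_eq_lcs (u v : List A) :
    ∃ w : List A, w.length = lcs u v ∧ w.Sublist u ∧ w.Sublist v :=
  Nat.sSup_mem (s := {n | ∃ w : List A, w.length = n ∧ w.Sublist u ∧ w.Sublist v})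
    ⟨0, [], rfl, List.nil_sublist u, List.nil_sublist v⟩ (bddAbove_length_common_sublist u v)

theorem levD_nonneg (u v : List A) : 0 ≤ levD u v := by
  obtain ⟨w, hw, hu, hv⟩ := exists_sublist_length_eq_lcs u v
  have hlu : (lcs u v : ℝ) ≤ u.length := by exact_mod_cast hw ▸ hu.length_le
  have hlv : (lcs u v : ℝ) ≤ v.length := by exact_mod_cast hw ▸ hv.length_le
  rw [levD]
  linarith

theorem levD_le (u v : List A) : levD u v ≤ ((u.length : ℝ) + v.length) / 2 :=
  sub_le_self _ (Nat.cast_nonneg _)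

theorem mul_le_length_add_length_of_no_common_infix
    (h : ∀ c : List A, c.length = p → c <:+: u → ¬ c <:+: v)
    (hu : w.Sublist u) (hv : w.Sublist v) {q : ℕ} (hq : q * p ≤ w.length) :
    q * (2 * p + 1) ≤ u.length + v.length := by
  induction q generalizing u v w with
  | zero => simp
  | succ q ih =>
    rw [Nat.succ_mul] at hq
    rw [← List.take_append_drop p w, List.append_sublist_iff] at hu hv
    obtain ⟨u₁, u₂, rfl, hu₁, hu₂⟩ := hu
    obtain ⟨v₁, v₂, rfl, hv₁, hv₂⟩ := hv
    have htail : q * (2 * p + 1) ≤ u₂.length + v₂.length := by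
      refine ih (fun c hc hcu hcv => h c hc ?_ ?_) hu₂ hv₂ ?_
      · exact hcu.trans (List.suffix_append u₁ u₂).isInfix
      · exact hcv.trans (List.suffix_append v₁ v₂).isInfix
      · rw [List.length_drop]
        omega
    have hlen : (w.take p).length = p := by
      rw [List.length_take]
      omega
    have hne : ¬ (u₁.length = p ∧ v₁.length = p) := by
      rintro ⟨hpu, hpv⟩
      have hwu : w.take p = u₁ := hu₁.eq_of_length (hlen.trans hpu.symm)
      have hwv : w.take p = v₁ := hv₁.eq_of_length (hlen.trans hpv.symm)
      refine h (w.take p) hlen ?_ ?_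
      · rw [hwu]
        exact (List.prefix_append u₁ u₂).isInfix
      · rw [hwv]
        exact (List.prefix_append v₁ v₂).isInfix
    have hpu : p ≤ u₁.length := hlen ▸ hu₁.length_le
    have hpv : p ≤ v₁.length := hlen ▸ hv₁.length_le
    rw [Nat.succ_mul, List.length_append, List.length_append]
    omega

theorem le_levD_of_no_common_infix
    (h : ∀ c : List A, c.length = p → c <:+: u → ¬ c <:+: v) :
    ((u.length : ℝ) + v.length) / (2 * (2 * p + 1)) - p ≤ levD u v := by
  have hp : 0 < p := by
    rcases Nat.eq_zero_or_pos p with rfl | hp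
    · exact absurd (List.nil_infix (l := v)) (h [] rfl List.nil_infix)
    · exact hp
  obtain ⟨w, hw, hu, hv⟩ := exists_sublist_length_eq_lcs u v
  have hblocks : lcs u v / p * (2 * p + 1) ≤ u.length + v.length :=
    mul_le_length_add_length_of_no_common_infix h hu hv (hw ▸ Nat.div_mul_le_self _ p)
  have hlcs : lcs u v * (2 * p + 1) ≤ (u.length + v.length) * p + p * (2 * p + 1) :=
    calc lcs u v * (2 * p + 1) ≤ (lcs u v / p * p + p) * (2 * p + 1) := by
          gcongr
          exact (Nat.lt_div_mul_add hp).le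
      _ = lcs u v / p * (2 * p + 1) * p + p * (2 * p + 1) := by ring
      _ ≤ (u.length + v.length) * p + p * (2 * p + 1) := by gcongr
  have hlcs' : (lcs u v : ℝ) * (2 * p + 1) ≤ (u.length + v.length) * p + p * (2 * p + 1) := by
    exact_mod_cast hlcs
  rw [levD, sub_le_iff_le_add, div_le_iff₀ (by positivity)]
  linarith

end Lcs

section Factor

variable {A : Type*} {x y : ℕ → A} {i j n : ℕ}

theorem length_factor (x : ℕ → A) (i n : ℕ) : (factor x i n).length = n :=
  List.length_ofFn

theorem factor_add (x : ℕ → A) (i m n : ℕ) :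
    factor x i (m + n) = factor x i m ++ factor x (i + m) n := by
  simp [factor, List.ofFn_add, add_assoc]

theorem factor_eq_factor_iff :
    factor x i n = factor y j n ↔ ∀ t < n, x (i + t) = y (j + t) := by
  simp only [factor, List.ofFn_inj, funext_iff, Fin.forall_iff]

theorem exists_factor_eq_of_infix {c : List A} (h : c <:+: factor x i n) :
    ∃ j, factor x j c.length = c := by
  obtain ⟨s, t, hst⟩ := h
  have hn : n = s.length + c.length + t.length := by
    rw [← length_factor x i n, ← hst, List.length_append, List.length_append]
  rw [hn, factor_add, factor_add] at hst
  have hsc := (List.append_inj hst (by simp [length_factor])).1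
  exact ⟨i + s.length, (List.append_inj hsc (length_factor x i s.length).symm).2.symm⟩

theorem shift_iterate_apply (k : ℕ) (x : ℕ → A) (i : ℕ) : shift^[k] x i = x (i + k) := by
  induction k generalizing x with
  | zero => rfl
  | succ k ih => rw [Function.iterate_succ_apply, ih, shift, add_assoc]

theorem factor_shift_iterate (k : ℕ) (x : ℕ → A) (i n : ℕ) :
    factor (shift^[k] x) i n = factor x (i + k) n :=
  factor_eq_factor_iff.2 fun t _ => by rw [shift_iterate_apply, add_right_comm]

end Factor

section Feldman

variable {A : Type*}

theorem levD_factor_shift_iterate_le (x : ℕ → A) (k l : ℕ) :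
    levD (factor (shift^[k] x) 0 l) (factor x 0 l) ≤ k := by
  have hlcs : l ≤ lcs (factor (shift^[k] x) 0 l) (factor x 0 l) + k := by
    rcases le_total l k with hlk | hkl
    · exact le_add_left hlk
    obtain ⟨m, rfl⟩ := Nat.exists_eq_add_of_le' hkl
    have hleft : (factor x k m).Sublist (factor (shift^[k] x) 0 (m + k)) := by
      rw [factor_add, factor_shift_iterate, zero_add]
      exact List.sublist_append_left _ _
    have hright : (factor x k m).Sublist (factor x 0 (m + k)) := by
      rw [add_comm m k, factor_add, zero_add]
      exact List.sublist_append_right _ _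
    simpa only [length_factor, add_le_add_iff_right] using length_le_lcs hleft hright
  have hlcs' : (l : ℝ) ≤ lcs (factor (shift^[k] x) 0 l) (factor x 0 l) + k := by
    exact_mod_cast hlcs
  rw [levD, length_factor, length_factor]
  linarith

theorem feld_shift_iterate (x : ℕ → A) (k : ℕ) : feld (shift^[k] x) x = 0 :=
  (squeeze_zero (fun _ => div_nonneg (levD_nonneg _ _) (Nat.cast_nonneg _))
    (fun l => div_le_div_of_nonneg_right (levD_factor_shift_iterate_le x k l) (Nat.cast_nonneg l))
    (tendsto_const_div_atTop_nhds_zero_nat (k : ℝ))).limsup_eq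

theorem levD_factor_div_le_one (x y : ℕ → A) (l : ℕ) :
    levD (factor x 0 l) (factor y 0 l) / l ≤ 1 := by
  refine div_le_one_of_le₀ ((levD_le _ _).trans_eq ?_) (Nat.cast_nonneg l)
  rw [length_factor, length_factor, add_self_div_two]

theorem one_div_le_feld {x y : ℕ → A} {p : ℕ} (h : ∀ i j, factor x i p ≠ factor y j p) :
    1 / (2 * p + 1 : ℝ) ≤ feld x y := by
  have hlev (l : ℕ) : (l : ℝ) / (2 * p + 1) - p ≤ levD (factor x 0 l) (factor y 0 l) := by
    have hinfix : ∀ c : List A, c.length = p → c <:+: factor x 0 l → ¬ c <:+: factor y 0 l := by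
      rintro c rfl hx hy
      obtain ⟨i, hi⟩ := exists_factor_eq_of_infix hx
      obtain ⟨j, hj⟩ := exists_factor_eq_of_infix hy
      exact h i j (hi.trans hj.symm)
    have hle := le_levD_of_no_common_infix hinfix
    rwa [length_factor, length_factor, ← two_mul, mul_div_mul_left _ _ two_ne_zero] at hle
  have hlim : Tendsto (fun l : ℕ => 1 / (2 * p + 1 : ℝ) - p / l) atTop
      (nhds (1 / (2 * p + 1))) := by
    simpa only [sub_zero] using (tendsto_const_div_atTop_nhds_zero_nat (p : ℝ)).const_sub _
  rw [← hlim.limsup_eq]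
  refine limsup_le_limsup ?_ hlim.isCoboundedUnder_le
    (isBoundedUnder_of ⟨1, levD_factor_div_le_one x y⟩)
  filter_upwards [eventually_gt_atTop 0] with l hl
  have hl₀ : (l : ℝ) ≠ 0 := Nat.cast_ne_zero.2 hl.ne'
  calc 1 / (2 * p + 1 : ℝ) - p / l = (l / (2 * p + 1) - p) / l := by
        rw [sub_div, div_right_comm, div_self hl₀]
    _ ≤ levD (factor x 0 l) (factor y 0 l) / l := by gcongr; exact hlev l

theorem exists_common_factor_of_feld_eq_zero {x y : ℕ → A} (h : feld x y = 0) (p : ℕ) :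
    ∃ i j, factor x i p = factor y j p := by
  by_contra! hne
  have hle := one_div_le_feld hne
  rw [h] at hle
  exact absurd hle (not_le.2 (by positivity))

theorem exists_lt_eq_shift_iterate_of_feld_eq_zero {x y : ℕ → A} {p : ℕ} (hp : 0 < p)
    (hx : x.Periodic p) (hy : y.Periodic p) (h : feld y x = 0) : ∃ k < p, y = shift^[k] x := by
  obtain ⟨a, b, hab⟩ := exists_common_factor_of_feld_eq_zero h p
  have htail (t : ℕ) : y (a + t) = x (b + t) := by
    rw [← (hy.const_add a).map_mod_nat t, ← (hx.const_add b).map_mod_nat t]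
    exact factor_eq_factor_iff.1 hab (t % p) (Nat.mod_lt t hp)
  have hpred : a * p = a + a * (p - 1) := by
    rw [← mul_one_add, Nat.add_sub_cancel' (Nat.one_le_of_lt hp)]
  refine ⟨(b + a * (p - 1)) % p, Nat.mod_lt _ hp, funext fun i => ?_⟩
  calc y i = y (i + a * p) := (hy.nat_mul a i).symm
    _ = y (a + (a * (p - 1) + i)) := by rw [hpred]; congr 1; ring
    _ = x (i + (b + a * (p - 1))) := by rw [htail]; congr 1; ring
    _ = x (i + (b + a * (p - 1)) % p) := by rw [← (hx.const_add i).map_mod_nat]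
    _ = shift^[(b + a * (p - 1)) % p] x i := (shift_iterate_apply _ x i).symm

end Feldman

section SlidingBlock

variable {A : Type*} {s : ℕ}

/-- The cellular automaton with diameter `s` and local rule `f`; the trivial diameter `s = 0`, for
which the image is constant, is allowed. -/
def slidingBlock (f : (Fin s → A) → A) (x : ℕ → A) : ℕ → A := fun i => f fun j => x (i + j)

variable {f : (Fin s → A) → A}

theorem slidingBlock_apply_congr {x y : ℕ → A} {i i' : ℕ} (h : ∀ j < s, x (i + j) = y (i' + j)) :
    slidingBlock f x i = slidingBlock f y i' :=
  congrArg f (funext fun j => h j j.isLt)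

theorem periodic_slidingBlock {x : ℕ → A} {p : ℕ} (hx : x.Periodic p) :
    (slidingBlock f x).Periodic p := fun i =>
  slidingBlock_apply_congr fun j _ => by rw [add_right_comm, hx]

theorem slidingBlock_eq_shift_iterate {k : ℕ} (h : ∀ u : ℕ → A, slidingBlock f u 0 = u k) :
    slidingBlock f = shift^[k] := by
  funext x i
  calc slidingBlock f x i = slidingBlock f (shift^[i] x) 0 :=
        slidingBlock_apply_congr fun j _ => by rw [shift_iterate_apply, zero_add, add_comm]
    _ = x (k + i) := by rw [h, shift_iterate_apply]
    _ = shift^[k] x i := by rw [shift_iterate_apply, add_comm]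

theorem slidingBlock_const {z : A}
    (h : feld (slidingBlock f fun _ => z) (fun _ => z) = 0) :
    slidingBlock f (fun _ => z) = fun _ => z := by
  have hz : Function.Periodic (fun _ : ℕ => z) 1 := fun _ => rfl
  obtain ⟨k, -, hk⟩ :=
    exists_lt_eq_shift_iterate_of_feld_eq_zero one_pos hz (periodic_slidingBlock hz) h
  rw [hk]
  exact funext fun i => shift_iterate_apply k _ i

end SlidingBlock

section MarkedWord

variable {A : Type*}

/-- The periodic word `(W₀ ⋯ Wₙ₋₁ a z^(n+s) a)^∞`, of period `2 * n + s + 2`. The two markers `a`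
and the run of `z` serve to detect by how much the word has been shifted. -/
def markedWord (W : ℕ → A) (a z : A) (n s : ℕ) : ℕ → A := fun i =>
  let r := i % (2 * n + s + 2)
  if r < n then W r else if r = n ∨ r = 2 * n + s + 1 then a else z

variable {W : ℕ → A} {a z : A} {n s i : ℕ} {f : (Fin s → A) → A}

theorem periodic_markedWord : (markedWord W a z n s).Periodic (2 * n + s + 2) := fun i => by
  simp only [markedWord, Nat.add_mod_right]

theorem markedWord_of_lt (hi : i < n) : markedWord W a z n s i = W i := by
  rw [markedWord, Nat.mod_eq_of_lt (by omega), if_pos hi]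

theorem markedWord_marker (hi : i = n ∨ i = 2 * n + s + 1) : markedWord W a z n s i = a := by
  rw [markedWord, Nat.mod_eq_of_lt (by omega), if_neg (by omega), if_pos hi]

theorem markedWord_of_gt (hi : n < i) (hi' : i < 2 * n + s + 1) : markedWord W a z n s i = z := by
  rw [markedWord, Nat.mod_eq_of_lt (by omega), if_neg (by omega), if_neg (by omega)]

theorem slidingBlock_markedWord_of_le (hi : i + s ≤ n) :
    slidingBlock f (markedWord W a z n s) i = slidingBlock f W i :=
  slidingBlock_apply_congr fun j hj => markedWord_of_lt (by omega)

theorem slidingBlock_markedWord_of_gt (hz : slidingBlock f (fun _ => z) = fun _ => z)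
    (hi : n < i) (hi' : i ≤ 2 * n + 1) : slidingBlock f (markedWord W a z n s) i = z :=
  calc slidingBlock f (markedWord W a z n s) i = slidingBlock f (fun _ => z) i :=
        slidingBlock_apply_congr fun j hj => markedWord_of_gt (by omega) (by omega)
    _ = z := congrFun hz i

theorem lt_of_slidingBlock_markedWord_eq_shift_iterate {k : ℕ}
    (hz : slidingBlock f (fun _ => z) = fun _ => z) (haz : a ≠ z) (hk : k < 2 * n + s + 2)
    (h : slidingBlock f (markedWord W a z n s) = shift^[k] (markedWord W a z n s)) : k < s := by
  have hrun (i : ℕ) (hi : n < i) (hi' : i ≤ 2 * n + 1) : markedWord W a z n s (i + k) = z := by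
    rw [← shift_iterate_apply k (markedWord W a z n s), ← h,
      slidingBlock_markedWord_of_gt hz hi hi']
  by_contra! hsk
  -- As `s ≤ k`, the run covers the marker ending the first period or, if it starts after that one,
  -- the marker at position `n` of the second period.
  rcases le_or_gt (n + k) (2 * n + s) with hlast | hlast
  · have hrun' := hrun (2 * n + s + 1 - k) (by omega) (by omega)
    rw [Nat.sub_add_cancel (by omega), markedWord_marker (Or.inr rfl)] at hrun'
    exact haz hrun'
  · have hrun' := hrun (n + (2 * n + s + 2) - k) (by omega) (by omega)
    rw [Nat.sub_add_cancel (by omega), periodic_markedWord, markedWord_marker (Or.inl rfl)] at hrun'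
    exact haz hrun'

end MarkedWord

section Rigidity

variable {A : Type*} {s : ℕ} {f : (Fin s → A) → A}

theorem exists_lt_forall_slidingBlock_apply_eq [Nontrivial A]
    (h : ∀ (x : ℕ → A) (p : ℕ), 0 < p → x.Periodic p → feld (slidingBlock f x) x = 0)
    (W : ℕ → A) (n : ℕ) : ∃ k < s, ∀ i, i + s ≤ n → slidingBlock f W i = W (i + k) := by
  obtain ⟨a, z, haz⟩ := exists_pair_ne A
  have hz := slidingBlock_const (h (fun _ => z) 1 one_pos fun _ => rfl)
  have hper : (markedWord W a z n s).Periodic (2 * n + s + 2) := periodic_markedWord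
  obtain ⟨k, hkp, hk⟩ := exists_lt_eq_shift_iterate_of_feld_eq_zero (by omega) hper
    (periodic_slidingBlock hper) (h _ _ (by omega) hper)
  have hks := lt_of_slidingBlock_markedWord_eq_shift_iterate hz haz hkp hk
  refine ⟨k, hks, fun i hi => ?_⟩
  rw [← slidingBlock_markedWord_of_le hi, hk, shift_iterate_apply, markedWord_of_lt (by omega)]

theorem exists_slidingBlock_eq_shift_iterate
    (h : ∀ (x : ℕ → A) (p : ℕ), 0 < p → x.Periodic p → feld (slidingBlock f x) x = 0) :
    ∃ k : ℕ, slidingBlock f = shift^[k] := by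
  rcases subsingleton_or_nontrivial A with _ | _
  · exact ⟨0, Subsingleton.elim _ _⟩
  by_contra! hne
  have hwitness (k : ℕ) : ∃ u : ℕ → A, slidingBlock f u 0 ≠ u k := by
    by_contra! hk
    exact hne k (slidingBlock_eq_shift_iterate hk)
  choose u hu using hwitness
  let W : ℕ → A := fun i => u (i / s) (i % s)
  obtain ⟨k, hks, hk⟩ := exists_lt_forall_slidingBlock_apply_eq h W (s * s)
  have hW (j : ℕ) (hj : j < s) : W (s * k + j) = u k j := by
    simp only [W, Nat.mul_add_div (Nat.zero_lt_of_lt hks), Nat.mul_add_mod,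
      Nat.div_eq_of_lt hj, Nat.mod_eq_of_lt hj, add_zero]
  apply hu k
  calc slidingBlock f (u k) 0 = slidingBlock f W (s * k) :=
        slidingBlock_apply_congr fun j hj => by rw [zero_add, hW j hj]
    _ = W (s * k + k) := hk _ (by simpa only [Nat.mul_succ] using Nat.mul_le_mul_left s hks)
    _ = u k k := hW k hks

theorem ca_feld_identity_iff_shift_power_general (f : (Fin s → A) → A) :
    List.TFAE [∀ x : ℕ → A, feld (slidingBlock f x) x = 0,
      ∀ (x : ℕ → A) (p : ℕ), 0 < p → x.Periodic p → feld (slidingBlock f x) x = 0,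
      ∃ k : ℕ, slidingBlock f = shift^[k]] := by
  tfae_have 1 → 2 := fun h x _ _ _ => h x
  tfae_have 2 → 3 := exists_slidingBlock_eq_shift_iterate
  tfae_have 3 → 1 := by
    rintro ⟨k, hk⟩ x
    rw [hk, feld_shift_iterate]
  tfae_finish

end Rigidity

/-- A cellular automaton lies in the Feldman class of the identity (i.e. `𝔡_L(F(x), x) = 0`
for every `x`) if and only if it is a power of the shift. -/
theorem ca_feld_identity_iff_shift_power {A : Type*} (F : (ℕ → A) → ℕ → A)
    (hCA : ∃ (s : ℕ) (f : (Fin s → A) → A), 1 ≤ s ∧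
      ∀ (x : ℕ → A) (i : ℕ), F x i = f (fun k => x (i + k))) :
    (∀ x : ℕ → A, feld (F x) x = 0) ↔ ∃ k : ℕ, F = shift^[k] := by
  obtain ⟨s, f, -, hf⟩ := hCA
  obtain rfl : F = slidingBlock f := funext fun x => funext (hf x)
  exact (ca_feld_identity_iff_shift_power_general f).out 0 2
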